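/- Fix a real number c with 0 < c < 1. Then td(0) = 12(1−c²) > 0, td'(0) = −(12/c)√(1−c²)(3+c²) < 0, td(β₃) = 12(1−c)⁴((2+c) − √(1+c)√(3+c))² > 0, and td(δ₂) < 0. -/

import Mathlib

noncomputable def beta3 (c : ℝ) : ℝ :=
  (c*Real.sqrt (1 - c^2) + Real.sqrt (3 - 8*c + 6*c^2 - c^4))/2
noncomputable def delta2 (c : ℝ) : ℝ :=
  (-2*c + Real.sqrt (9 - 2*c^2 - 3*c^4))/(6*Real.sqrt (1 - c^2))

/-- `td(ξ)` equals the third derivative at `t = 1` of the quartic G² radial error `ψ₄(·,ξ)`. -/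
noncomputable def td (c ξ : ℝ) : ℝ :=
  (48*Real.sqrt (1 - c^2)/c)*ξ^3 + 48*ξ^2
    - 12*Real.sqrt (1 - c^2)*(3/c + c)*ξ + 12*(1 - c^2)

/-- Sign properties of `td` at `0`, `β₃` and `δ₂`. -/
theorem stmt_8 (c : ℝ) (hc0 : 0 < c) (hc1 : c < 1) :
    (td c 0 = 12*(1 - c^2) ∧ 0 < td c 0) ∧
    (deriv (td c) 0 = -(12/c)*Real.sqrt (1 - c^2)*(3 + c^2) ∧ deriv (td c) 0 < 0) ∧
    (td c (beta3 c) = 12*(1 - c)^4*((2 + c) - Real.sqrt (1 + c)*Real.sqrt (3 + c))^2 ∧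
      0 < td c (beta3 c)) ∧
    td c (delta2 c) < 0 := by
  have h1 : 0 < 1 - c^2 := by nlinarith
  have hs : 0 < Real.sqrt (1 - c^2) := Real.sqrt_pos.mpr h1
  have hs2 : Real.sqrt (1 - c^2) ^ 2 = 1 - c^2 := Real.sq_sqrt h1.le
  have hz : td c 0 = 12*(1 - c^2) := by unfold td; ring
  have hd : deriv (td c) 0 = -(12/c)*Real.sqrt (1 - c^2)*(3 + c^2) := by
    have h : HasDerivAt (td c) ((48*Real.sqrt (1 - c^2)/c)*(3*(0:ℝ)^2*1) + 48*(2*0*1)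
        - 12*Real.sqrt (1 - c^2)*(3/c + c)*1) 0 := by
      have i0 := hasDerivAt_id' (0:ℝ)
      have h3 : HasDerivAt (fun x : ℝ => x^3) (3*(0:ℝ)^2*1) 0 := by simpa using hasDerivAt_pow 3 (0:ℝ)
      have h2 : HasDerivAt (fun x : ℝ => x^2) (2*(0:ℝ)*1) 0 := by simpa using hasDerivAt_pow 2 (0:ℝ)
      exact (((h3.const_mul (48*Real.sqrt (1 - c^2)/c)).add (h2.const_mul 48)).sub
        (i0.const_mul (12*Real.sqrt (1 - c^2)*(3/c + c)))).add_const (12*(1 - c^2))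
    rw [h.deriv]
    field_simp
    ring
  have hb : td c (beta3 c)
      = 12*(1 - c)^4*((2 + c) - Real.sqrt (1 + c)*Real.sqrt (3 + c))^2 := by
    have e1 : Real.sqrt (1 - c^2) = Real.sqrt (1 - c) * Real.sqrt (1 + c) := by
      rw [← Real.sqrt_mul (by linarith)]; congr 1; ring
    have e2 : Real.sqrt (3 - 8*c + 6*c^2 - c^4) = (1 - c) * (Real.sqrt (1 - c) * Real.sqrt (3 + c)) := by
      rw [← Real.sqrt_mul (by linarith), show 3 - 8*c + 6*c^2 - c^4 = (1-c)^2 * ((1-c)*(3+c)) by ring,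
        Real.sqrt_mul (sq_nonneg _), Real.sqrt_sq (by linarith)]
    unfold td beta3
    rw [e1, e2]
    have hD := Real.sq_sqrt (show 0 ≤ 1 - c by linarith)
    have hA := Real.sq_sqrt (show 0 ≤ 1 + c by linarith)
    have hB := Real.sq_sqrt (show 0 ≤ 3 + c by linarith)
    generalize Real.sqrt (1 - c) = d at *
    generalize Real.sqrt (1 + c) = a at *
    generalize Real.sqrt (3 + c) = b at *
    obtain ⟨x, hx⟩ : ∃ x, x = (c*(d*a) + (1-c)*(d*b))/2 := ⟨_, rfl⟩
    rw [← hx]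
    obtain ⟨p, hp⟩ : ∃ p, p = a*b := ⟨_, rfl⟩
    have hp2 : p^2 = (1+c)*(3+c) := by rw [hp, ← hA, ← hB]; ring
    have q1 : d*a*x = (1-c)*(c*(1+c)+(1-c)*p)/2 := by
      have : d*a*x = d^2*(c*a^2+(1-c)*p)/2 := by rw [hx, hp]; ring
      rw [this, hD, hA]
    have q2 : x^2 = (1-c)*(c^2*(1+c)+2*c*(1-c)*p+(1-c)^2*(3+c))/4 := by
      have : x^2 = d^2*(c^2*a^2+2*c*(1-c)*p+(1-c)^2*b^2)/4 := by rw [hx, hp]; ring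
      rw [this, hD, hA, hB]
    have : 48*(d*a)/c*x^3 + 48*x^2 - 12*(d*a)*(3/c+c)*x + 12*(1-c^2)
      = (48*(d*a*x)*x^2 + 48*c*x^2 - 12*(3+c^2)*(d*a*x) + 12*c*(1-c^2))/c := by
      field_simp
    rw [this, q1, q2, div_eq_iff hc0.ne', ← hp]
    ring_nf
  have hne : Real.sqrt (1 + c)*Real.sqrt (3 + c) < 2 + c := by
    rw [← Real.sqrt_mul (by linarith), Real.sqrt_lt' (by linarith)]
    nlinarith
  refine ⟨⟨hz, by rw [hz]; linarith⟩, ⟨hd, ?_⟩, ⟨hb, ?_⟩, ?_⟩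
  · rw [hd]
    have : 0 < 12/c*Real.sqrt (1 - c^2)*(3 + c^2) := by positivity
    linarith
  · rw [hb]
    have : 0 < 1 - c := by linarith
    have : 0 < 2 + c - Real.sqrt (1 + c)*Real.sqrt (3 + c) := by linarith
    positivity
  · unfold td delta2
    have hR : 0 < 9 - 2*c^2 - 3*c^4 := by nlinarith
    have hR0 := Real.sqrt_pos.mpr hR
    have hR2 := Real.sq_sqrt hR.le
    generalize Real.sqrt (9 - 2*c^2 - 3*c^4) = R at *
    generalize Real.sqrt (1 - c^2) = s at *
    have key : c*(54-64*c^2+18*c^4) < R^3 := by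
      refine lt_of_pow_lt_pow_left₀ 2 (by positivity) ?_
      have : (R^3)^2 = (9 - 2*c^2 - 3*c^4)^3 := by rw [← hR2]; ring
      rw [this]
      have h4 : 0 < 27*(1-c^2)^4*(27-18*c^2-(c^2)^2) := by
        have : 0 < 27-18*c^2-(c^2)^2 := by nlinarith
        positivity
      linarith [show (9 - 2*c^2 - 3*c^4)^3 - (c*(54-64*c^2+18*c^4))^2
        = 27*(1-c^2)^4*(27-18*c^2-(c^2)^2) by ring]
    have e : 48*s/c*((-2*c+R)/(6*s))^3 + 48*((-2*c+R)/(6*s))^2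
        - 12*s*(3/c+c)*((-2*c+R)/(6*s)) + 12*(1-c^2)
        = 12/(c*s^2) * (4*((-2*c+R)/6)^3 + 4*c*((-2*c+R)/6)^2
          - s^2*(3+c^2)*((-2*c+R)/6) + c*s^2*(1-c^2)) := by
      field_simp
      ring
    rw [e, hs2]
    apply mul_neg_of_pos_of_neg (by positivity)
    have e' : 27 * (4*((-2*c+R)/6)^3 + 4*c*((-2*c+R)/6)^2
          - (1-c^2)*(3+c^2)*((-2*c+R)/6) + c*(1-c^2)*(1-c^2))
        = c*(54-64*c^2+18*c^4) - R^3 + 0 := by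
      linear_combination (3/2*R) * hR2
    linarith
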